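/- arXiv:1704.08191 — 10 statements merged into one kernel-verified Lean document; each statement's English description precedes it below -/
import Mathlib

section
/- For all real numbers α > 0, β > 0 and every real number m, the modified extension of the classical beta function admits the series expansion B(α,β;m) = Σ_{n=0}^∞ (m^n / n!) · B(α+n, β+n), where B(x,y) denotes the classical Euler beta function; in particular the series on the right-hand side converges to the value of the defining integral. -/
/-!
On `(0, 1)` the exponential series gives
`t ^ (α - 1) (1 - t) ^ (β - 1) exp (m t (1 - t)) = ∑ mⁿ / n! · t ^ (α + n - 1) (1 - t) ^ (β + n - 1)`.
Since `0 ≤ t (1 - t) ≤ 1`, the `n`-th term is bounded by `|m|ⁿ / n!` times the beta weight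
`t ^ (α - 1) (1 - t) ^ (β - 1)`, which is integrable for `α, β > 0`
(`intervalIntegrable_beta_weight`). These bounds sum to `exp |m|` times the weight, so dominated
convergence allows termwise integration.
-/

open MeasureTheory Real

/-- The modified extension of the classical beta function (MECBF). -/
noncomputable def mecbf (α β m : ℝ) : ℝ :=
  ∫ t in (0:ℝ)..1, t ^ (α - 1) * (1 - t) ^ (β - 1) * Real.exp (m * t * (1 - t))

/-- The classical Euler beta function. -/
noncomputable def betaFn (x y : ℝ) : ℝ :=
  ∫ t in (0:ℝ)..1, t ^ (x - 1) * (1 - t) ^ (y - 1)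

lemma intervalIntegrable_beta_weight {α β : ℝ} (hα : 0 < α) (hβ : 0 < β) :
    IntervalIntegrable (fun t : ℝ => t ^ (α - 1) * (1 - t) ^ (β - 1)) volume 0 1 := by
  have h := (Complex.betaIntegral_convergent (u := (α : ℂ)) (v := (β : ℂ))
    (by simpa using hα) (by simpa using hβ)).norm
  refine h.congr_ae ?_
  rw [Set.uIoc_of_le zero_le_one]
  have hne : ∀ᵐ t : ℝ ∂(volume.restrict (Set.Ioc 0 1)), t ≠ 1 :=
    ae_restrict_of_ae (Measure.ae_ne volume 1)
  filter_upwards [ae_restrict_mem measurableSet_Ioc, hne] with t ht ht1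
  have h1 : 0 < 1 - t := sub_pos.2 (lt_of_le_of_ne ht.2 ht1)
  rw [norm_mul, Complex.norm_cpow_eq_rpow_re_of_pos ht.1,
    show (1 : ℂ) - (t : ℂ) = ((1 - t : ℝ) : ℂ) by push_cast; rfl, Complex.norm_cpow_eq_rpow_re_of_pos h1]
  simp

lemma beta_weight_shift (α β : ℝ) {t : ℝ} (h0 : 0 < t) (h1 : 0 < 1 - t) (n : ℕ) :
    t ^ (α + n - 1) * (1 - t) ^ (β + n - 1) =
      t ^ (α - 1) * (1 - t) ^ (β - 1) * (t * (1 - t)) ^ n := by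
  rw [show α + n - 1 = (α - 1) + n by ring, show β + n - 1 = (β - 1) + n by ring,
    rpow_add_natCast h0.ne', rpow_add_natCast h1.ne', mul_pow]
  ring

theorem mecbf_series_expansion (α β m : ℝ) (hα : 0 < α) (hβ : 0 < β) :
    Summable (fun n : ℕ => m ^ n / (n.factorial : ℝ) * betaFn (α + n) (β + n)) ∧
      mecbf α β m = ∑' n : ℕ, m ^ n / (n.factorial : ℝ) * betaFn (α + n) (β + n) := by
  suffices h : HasSum (fun n : ℕ => m ^ n / (n.factorial : ℝ) * betaFn (α + n) (β + n))
      (mecbf α β m) from ⟨h.summable, h.tsum_eq.symm⟩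
  -- The endpoint `t = 1` is discarded: there `(1 - t) ^ (β + n - 1)` need not split as a product.
  have hne : ∀ᵐ t : ℝ, t ≠ 1 := Measure.ae_ne volume 1
  have hexp : ∀ x : ℝ, HasSum (fun n : ℕ => x ^ n / (n.factorial : ℝ)) (Real.exp x) := fun x => by
    rw [Real.exp_eq_exp_ℝ]
    exact NormedSpace.expSeries_div_hasSum_exp x
  simp only [betaFn, mecbf, ← intervalIntegral.integral_const_mul]
  refine intervalIntegral.hasSum_integral_of_dominated_convergence
    (fun n t => |m| ^ n / (n.factorial : ℝ) * (t ^ (α - 1) * (1 - t) ^ (β - 1))) ?_ ?_ ?_ ?_ ?_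
  · intro n
    exact (by fun_prop : Measurable _).aestronglyMeasurable
  · intro n
    filter_upwards [hne] with t ht1 ht
    rw [Set.uIoc_of_le zero_le_one] at ht
    have h0 : 0 < t := ht.1
    have h1 : 0 < 1 - t := sub_pos.2 (lt_of_le_of_ne ht.2 ht1)
    have hw : 0 ≤ t ^ (α - 1) * (1 - t) ^ (β - 1) := by positivity
    have hp : (t * (1 - t)) ^ n ≤ 1 := pow_le_one₀ (by positivity) (by nlinarith)
    rw [beta_weight_shift α β h0 h1, norm_mul, norm_div, norm_pow, Real.norm_eq_abs,
      Real.norm_of_nonneg (Nat.cast_nonneg _), Real.norm_of_nonneg (by positivity)]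
    exact mul_le_mul_of_nonneg_left (mul_le_of_le_one_right hw hp) (by positivity)
  · exact Filter.Eventually.of_forall fun t _ => (hexp |m|).summable.mul_right _
  · simp only [tsum_mul_right]
    exact (intervalIntegrable_beta_weight hα hβ).const_mul _
  · filter_upwards [hne] with t ht1 ht
    rw [Set.uIoc_of_le zero_le_one] at ht
    have h1 : 0 < 1 - t := sub_pos.2 (lt_of_le_of_ne ht.2 ht1)
    refine ((hexp (m * t * (1 - t))).mul_left (t ^ (α - 1) * (1 - t) ^ (β - 1))).congr_fun ?_
    intro n
    rw [beta_weight_shift α β ht.1 h1, mul_assoc m, mul_pow m]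
    ring
end

section
/- For all real numbers α, β, s with 0 < s, s < α and s < β, the Mellin-type transform of the modified extension of the classical beta function with negated parameter satisfies ∫₀^∞ m^(s-1) · B(α, β; -m) dm = Γ(s) · B(α - s, β - s), where B(x,y) denotes the classical Euler beta function and Γ is the gamma function. -/
/-!
For fixed `t ∈ (0, 1)` the inner integral over `m` is a Gamma integral with rate `t (1 - t)`:
`∫₀^∞ m ^ (s - 1) exp (-m t (1 - t)) dm = Γ(s) (t (1 - t)) ^ (-s)`. Multiplying by
`t ^ (α - 1) (1 - t) ^ (β - 1)` gives `Γ(s)` times the integrand of `B(α - s, β - s)`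
(`integral_mellinKernel`), which is integrable on `(0, 1)` since `s < α` and `s < β`
(`integrableOn_beta`). As the kernel is nonnegative, this yields integrability on the product, so
Fubini's theorem applies and exchanging the two integrals gives the result.
-/

open MeasureTheory Real

/-- The integrand of the double integral whose iterated integral is the Mellin transform of
`m ↦ B(α, β; -m)`. -/
noncomputable def mellinKernel (α β s m t : ℝ) : ℝ :=
  m ^ (s - 1) * (t ^ (α - 1) * (1 - t) ^ (β - 1) * Real.exp (-m * t * (1 - t)))

theorem integrableOn_beta {x y : ℝ} (hx : 0 < x) (hy : 0 < y) :
    IntegrableOn (fun t : ℝ => t ^ (x - 1) * (1 - t) ^ (y - 1)) (Set.Ioo 0 1) := by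
  have h := Complex.betaIntegral_convergent (u := (x : ℂ)) (v := (y : ℂ)) (by simpa) (by simpa)
  rw [intervalIntegrable_iff_integrableOn_Ioo_of_le zero_le_one] at h
  refine (Integrable.re h).congr ?_
  filter_upwards [ae_restrict_mem measurableSet_Ioo] with t ht
  have h1 : (t : ℂ) ^ ((x : ℂ) - 1) = ((t ^ (x - 1) : ℝ) : ℂ) := by
    rw [Complex.ofReal_cpow ht.1.le]; simp
  have h2 : (1 - (t : ℂ)) ^ ((y : ℂ) - 1) = (((1 - t) ^ (y - 1) : ℝ) : ℂ) := by
    rw [Complex.ofReal_cpow (sub_nonneg.2 ht.2.le)]; simp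
  rw [h1, h2, ← Complex.ofReal_mul]
  exact Complex.ofReal_re _

theorem mellinKernel_eq (α β s m t : ℝ) :
    mellinKernel α β s m t = t ^ (α - 1) * (1 - t) ^ (β - 1) *
      (m ^ (s - 1) * Real.exp (-((t * (1 - t)) * m))) := by
  rw [mellinKernel, show -m * t * (1 - t) = -((t * (1 - t)) * m) by ring]
  ring

theorem mellinKernel_nonneg (α β s : ℝ) {m t : ℝ} (hm : 0 < m) (ht : t ∈ Set.Ioo (0 : ℝ) 1) :
    0 ≤ mellinKernel α β s m t := by
  have h0 := ht.1
  have h1 := sub_pos.2 ht.2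
  unfold mellinKernel
  positivity

theorem integral_mellinKernel (α β : ℝ) {s t : ℝ} (hs : 0 < s) (ht : t ∈ Set.Ioo (0 : ℝ) 1) :
    ∫ m in Set.Ioi (0 : ℝ), mellinKernel α β s m t =
      Real.Gamma s * (t ^ (α - s - 1) * (1 - t) ^ (β - s - 1)) := by
  have h0 := ht.1
  have h1 := sub_pos.2 ht.2
  simp_rw [mellinKernel_eq]
  rw [integral_const_mul, Real.integral_rpow_mul_exp_neg_mul_Ioi hs (mul_pos h0 h1), one_div,
    Real.inv_rpow (mul_pos h0 h1).le, Real.mul_rpow h0.le h1.le,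
    show α - s - 1 = (α - 1) - s by ring, show β - s - 1 = (β - 1) - s by ring,
    Real.rpow_sub h0 (α - 1) s, Real.rpow_sub h1 (β - 1) s]
  field_simp

theorem integrableOn_mellinKernel (α β : ℝ) {s t : ℝ} (hs : 0 < s)
    (ht : t ∈ Set.Ioo (0 : ℝ) 1) :
    IntegrableOn (fun m => mellinKernel α β s m t) (Set.Ioi 0) := by
  -- A non-integrable function would have Bochner integral zero, but this integral is positive.
  refine not_imp_comm.1 integral_undef ?_
  rw [integral_mellinKernel α β hs ht]
  have h0 := ht.1
  have h1 := sub_pos.2 ht.2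
  have := Real.Gamma_pos_of_pos hs
  positivity

theorem integrable_mellinKernel_prod {α β s : ℝ} (hs : 0 < s) (hsα : s < α) (hsβ : s < β) :
    Integrable (Function.uncurry (mellinKernel α β s))
      ((volume.restrict (Set.Ioi (0 : ℝ))).prod (volume.restrict (Set.Ioo (0 : ℝ) 1))) := by
  have hmeas : Measurable (Function.uncurry (mellinKernel α β s)) := by
    unfold mellinKernel Function.uncurry
    fun_prop
  rw [integrable_prod_iff' hmeas.aestronglyMeasurable]
  constructor
  · filter_upwards [ae_restrict_mem measurableSet_Ioo] with t ht
    exact integrableOn_mellinKernel α β hs ht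
  · refine ((integrableOn_beta (sub_pos.2 hsα) (sub_pos.2 hsβ)).const_mul
      (Real.Gamma s)).congr ?_
    filter_upwards [ae_restrict_mem measurableSet_Ioo] with t ht
    rw [← integral_mellinKernel α β hs ht]
    refine setIntegral_congr_fun measurableSet_Ioi fun m hm => ?_
    exact (Real.norm_of_nonneg (mellinKernel_nonneg α β s hm ht)).symm

theorem mecbf_mellin (α β s : ℝ) (hs : 0 < s) (hsα : s < α) (hsβ : s < β) :
    ∫ m in Set.Ioi (0 : ℝ), m ^ (s - 1) * mecbf α β (-m) =
      Real.Gamma s * betaFn (α - s) (β - s) := by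
  have hl (m : ℝ) : m ^ (s - 1) * mecbf α β (-m) =
      ∫ t in Set.Ioo (0 : ℝ) 1, mellinKernel α β s m t := by
    simp only [mellinKernel, mecbf]
    rw [intervalIntegral.integral_of_le zero_le_one, integral_Ioc_eq_integral_Ioo,
      integral_const_mul]
  simp_rw [hl]
  rw [integral_integral_swap (integrable_mellinKernel_prod hs hsα hsβ), betaFn,
    intervalIntegral.integral_of_le zero_le_one, integral_Ioc_eq_integral_Ioo,
    ← integral_const_mul]
  exact setIntegral_congr_fun measurableSet_Ioo fun t ht => integral_mellinKernel α β hs ht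
end

section
/- For all real numbers α > 0, β > 0 and every real number m, the modified extension of the classical beta function has the trigonometric integral representation B(α, β; m) = 2 · ∫₀^(π/2) (cos θ)^(2α-1) · (sin θ)^(2β-1) · exp(m · cos²θ · sin²θ) dθ. -/
/-!
The substitution `t = cos² θ` maps `[0, π/2]` antitonically onto `[0, 1]`, with
`1 - t = sin² θ` and `-dt = 2 cos θ sin θ dθ`. One factor `cos θ sin θ` coming from the derivative
turns the exponents `2 (α - 1)`, `2 (β - 1)` into `2 α - 1`, `2 β - 1`. The change of variables
formula for antitone functions needs no integrability, and the integrands are only compared on the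
open interval, where `cos θ` and `sin θ` are positive.
-/

open MeasureTheory Real

theorem mecbf_trig_repr (α β m : ℝ) (hα : 0 < α) (hβ : 0 < β) :
    mecbf α β m =
      2 * ∫ θ in (0:ℝ)..(Real.pi / 2),
        Real.cos θ ^ (2 * α - 1) * Real.sin θ ^ (2 * β - 1) *
          Real.exp (m * Real.cos θ ^ 2 * Real.sin θ ^ 2) := by
  have hanti : AntitoneOn (fun θ : ℝ => cos θ ^ 2) (Set.Icc 0 (π / 2)) := by
    intro x hx y hy hxy
    have hcy : 0 ≤ cos y := cos_nonneg_of_neg_pi_div_two_le_of_le (by linarith [hy.1, pi_pos]) hy.2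
    have hle : cos y ≤ cos x := cos_le_cos_of_nonneg_of_le_pi hx.1 (by linarith [hy.2, pi_pos]) hxy
    exact pow_le_pow_left₀ hcy hle 2
  have himage : (fun θ : ℝ => cos θ ^ 2) '' Set.Icc 0 (π / 2) = Set.Icc 0 1 := by
    apply Set.Subset.antisymm
    · rintro _ ⟨x, -, rfl⟩
      exact ⟨sq_nonneg _, cos_sq_le_one x⟩
    · have hcont : ContinuousOn (fun θ : ℝ => cos θ ^ 2) (Set.Icc 0 (π / 2)) := by fun_prop
      simpa using intermediate_value_Icc' (by positivity) hcont
  have hderiv : ∀ x ∈ Set.Icc 0 (π / 2), HasDerivWithinAt (fun θ : ℝ => cos θ ^ 2)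
      (-(2 * cos x * sin x)) (Set.Icc 0 (π / 2)) x := by
    intro x _
    have h := ((hasDerivAt_cos x).pow 2).hasDerivWithinAt (s := Set.Icc 0 (π / 2))
    exact h.congr_deriv (by norm_num)
  have hcov := integral_image_eq_integral_deriv_smul_of_antitoneOn measurableSet_Icc hderiv hanti
    (fun t : ℝ => t ^ (α - 1) * (1 - t) ^ (β - 1) * Real.exp (m * t * (1 - t)))
  rw [himage] at hcov
  rw [mecbf, intervalIntegral.integral_of_le zero_le_one, ← integral_Icc_eq_integral_Ioc, hcov,
    intervalIntegral.integral_of_le (by positivity), ← integral_const_mul,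
    integral_Icc_eq_integral_Ioo, integral_Ioc_eq_integral_Ioo]
  refine setIntegral_congr_fun measurableSet_Ioo fun x hx => ?_
  have hc : 0 < cos x := cos_pos_of_mem_Ioo ⟨by linarith [hx.1, pi_pos], hx.2⟩
  have hs : 0 < sin x := sin_pos_of_pos_of_lt_pi hx.1 (by linarith [hx.2, pi_pos])
  have hpow : ∀ a c : ℝ, 0 < c → c * (c ^ 2) ^ (a - 1) = c ^ (2 * a - 1) := by
    intro a c h
    rw [← rpow_natCast c 2, ← rpow_mul h.le]
    nth_rewrite 1 [← rpow_one c]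
    rw [← rpow_add h]
    congr 1
    push_cast
    ring
  have hsin : 1 - cos x ^ 2 = sin x ^ 2 := by linarith [sin_sq_add_cos_sq x]
  simp only [neg_neg, smul_eq_mul, hsin]
  rw [← hpow α _ hc, ← hpow β _ hs]
  ring
end

section
/- For all real numbers α > 0, β > 0 and every real number m, the modified extension of the classical beta function has the integral representation B(α, β; m) = ∫₀^∞ u^(α-1) / (1+u)^(α+β) · exp(m·u / (1+u)²) du. -/
/-!
The identity is the change of variables `t = u / (1 + u)`, a bijection from `(0, ∞)` onto `(0, 1)`
with derivative `1 / (1 + u) ^ 2`. Under it `1 - t = 1 / (1 + u)`, so that `t (1 - t)` becomes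
`u / (1 + u) ^ 2` and the powers of `1 + u` collect to `(1 + u) ^ (-(α + β))`.
The one-dimensional change-of-variables formula for injective maps needs no integrability.
-/

open MeasureTheory Real

lemma image_div_one_add : (fun u : ℝ => u / (1 + u)) '' Set.Ioi 0 = Set.Ioo 0 1 := by
  ext t
  constructor
  · rintro ⟨u, hu, rfl⟩
    have hu : 0 < u := hu
    refine ⟨by positivity, ?_⟩
    rw [div_lt_one (by positivity)]
    linarith
  · rintro ⟨h0, h1⟩
    have h : 0 < 1 - t := by linarith
    refine ⟨t / (1 - t), div_pos h0 h, ?_⟩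
    field_simp
    ring

theorem mecbf_infinite_repr (α β m : ℝ) (hα : 0 < α) (hβ : 0 < β) :
    mecbf α β m =
      ∫ u in Set.Ioi (0 : ℝ),
        u ^ (α - 1) / (1 + u) ^ (α + β) * Real.exp (m * u / (1 + u) ^ 2) := by
  have hderiv : ∀ u ∈ Set.Ioi (0 : ℝ), HasDerivWithinAt (fun u : ℝ => u / (1 + u))
      (1 / (1 + u) ^ 2) (Set.Ioi 0) u := by
    intro u hu
    have hu : 0 < u := hu
    have h := (hasDerivAt_id u).div ((hasDerivAt_id u).const_add 1)
      (by simp only [id]; positivity)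
    refine (h.congr_deriv ?_).hasDerivWithinAt
    simp
  have hinj : Set.InjOn (fun u : ℝ => u / (1 + u)) (Set.Ioi 0) := by
    intro u hu v hv h
    have hu : 0 < u := hu
    have hv : 0 < v := hv
    have h : u / (1 + u) = v / (1 + v) := h
    rw [div_eq_div_iff (by positivity) (by positivity)] at h
    linarith
  rw [mecbf, intervalIntegral.integral_of_le zero_le_one, integral_Ioc_eq_integral_Ioo,
    ← image_div_one_add, integral_image_eq_integral_abs_deriv_smul measurableSet_Ioi hderiv hinj]
  refine setIntegral_congr_fun measurableSet_Ioi fun u hu => ?_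
  have hu : 0 < u := hu
  have hu1 : 0 < 1 + u := by positivity
  have hsub : 1 - u / (1 + u) = (1 + u)⁻¹ := by field_simp; ring
  have hexp : m * (u / (1 + u)) * (1 + u)⁻¹ = m * u / (1 + u) ^ 2 := by field_simp
  have hpow : (1 + u) ^ (α + β) = (1 + u) ^ (α - 1) * (1 + u) ^ (β - 1) * (1 + u) ^ 2 := by
    rw [← rpow_natCast, ← rpow_add hu1, ← rpow_add hu1]
    congr 1
    push_cast
    ring
  simp only [smul_eq_mul]
  rw [hsub, hexp, hpow, abs_of_pos (by positivity), div_rpow hu.le hu1.le, inv_rpow hu1.le]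
  field_simp
end

section
/- For all real numbers α > 0, β > 0 and every real number m, the modified extension of the classical beta function has the integral representation B(α, β; m) = 2^(1-α-β) · ∫_{-1}^{1} (1+t)^(α-1) · (1-t)^(β-1) · exp(m·(1-t²)/4) dt. -/
/-!
The affine substitution `s = (1 + t) / 2` maps `[-1, 1]` onto `[0, 1]`, with `1 - s = (1 - t) / 2`
and `s (1 - s) = (1 - t ^ 2) / 4`. Pulling the powers of `2` out of the two real powers gives
`2 ^ (2 - α - β)`, and the Jacobian `1 / 2` turns this into `2 ^ (1 - α - β)`.
-/

open MeasureTheory Real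

theorem mecbf_symm_interval_repr (α β m : ℝ) (hα : 0 < α) (hβ : 0 < β) :
    mecbf α β m =
      (2 : ℝ) ^ (1 - α - β) *
        ∫ t in (-1 : ℝ)..1,
          (1 + t) ^ (α - 1) * (1 - t) ^ (β - 1) * Real.exp (m * (1 - t ^ 2) / 4) := by
  have hsub := intervalIntegral.integral_comp_div_add (a := -1) (b := 1)
    (fun s : ℝ => s ^ (α - 1) * (1 - s) ^ (β - 1) * Real.exp (m * s * (1 - s)))
    (two_ne_zero' ℝ) (1 / 2)
  norm_num at hsub
  have hscale : (∫ t in (-1 : ℝ)..1, (t / 2 + 1 / 2) ^ (α - 1) * (1 - (t / 2 + 1 / 2)) ^ (β - 1) *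
      Real.exp (m * (t / 2 + 1 / 2) * (1 - (t / 2 + 1 / 2)))) =
      ∫ t in (-1 : ℝ)..1, (2 * (2 : ℝ) ^ (1 - α - β)) *
        ((1 + t) ^ (α - 1) * (1 - t) ^ (β - 1) * Real.exp (m * (1 - t ^ 2) / 4)) := by
    refine intervalIntegral.integral_congr fun t ht => ?_
    rw [Set.uIcc_of_le (by norm_num)] at ht
    have h₁ : t / 2 + 1 / 2 = (1 + t) / 2 := by ring
    have h₂ : 1 - (1 + t) / 2 = (1 - t) / 2 := by ring
    have h₃ : m * ((1 + t) / 2) * ((1 - t) / 2) = m * (1 - t ^ 2) / 4 := by ring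
    have hpow : 2 * (2 : ℝ) ^ (1 - α - β) = ((2 : ℝ) ^ (α - 1))⁻¹ * ((2 : ℝ) ^ (β - 1))⁻¹ := by
      rw [← Real.rpow_neg two_pos.le, ← Real.rpow_neg two_pos.le, ← Real.rpow_add two_pos,
        show -(α - 1) + -(β - 1) = 1 + (1 - α - β) by ring, Real.rpow_add two_pos, Real.rpow_one]
    -- On `[-1, 1]` both bases are nonnegative, as splitting the real powers requires.
    simp only [h₁, h₂, h₃, hpow]
    rw [Real.div_rpow (by linarith [ht.1]) two_pos.le,
      Real.div_rpow (by linarith [ht.2]) two_pos.le]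
    ring
  norm_num at hscale
  rw [hscale] at hsub
  unfold mecbf
  linarith
end

section
/- For all real numbers α > 0, β > 0 and every real number m, the modified extension of the classical beta function has the integral representation B(α, β; m) = 2^(1-α-β) · ∫_{-∞}^{∞} exp((α-β)·x + m / (4·cosh²x)) / (cosh x)^(α+β) dx. -/
/-!
The representation is the change of variables `t = e^x / (2 cosh x)`, an increasing bijection from
`ℝ` onto `(0, 1)`. It satisfies `1 - t = e^(-x) / (2 cosh x)`, hence `t (1 - t) = 1 / (4 cosh² x)`,
and `dt = dx / (2 cosh² x)`; substituting these gives the integrand on the line, up to the constant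
`2 ^ (1 - α - β)`. The change of variables formula used does not require integrability.
-/

open MeasureTheory Real

/-- The substitution `x ↦ e^x / (2 cosh x)`, i.e. the logistic function at `2 x`. -/
noncomputable def coshSubst (x : ℝ) : ℝ := exp x / (2 * cosh x)

lemma one_sub_coshSubst (x : ℝ) : 1 - coshSubst x = exp (-x) / (2 * cosh x) := by
  have hc := cosh_pos x
  unfold coshSubst
  field_simp
  rw [cosh_eq]
  ring

lemma hasDerivAt_coshSubst (x : ℝ) : HasDerivAt coshSubst (2 / (2 * cosh x) ^ 2) x := by
  have hc := cosh_pos x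
  have h := (hasDerivAt_exp x).div ((hasDerivAt_cosh x).const_mul 2) (by positivity)
  refine h.congr_deriv ?_
  congr 1
  have h1 : exp x * exp (-x) = 1 := by rw [← exp_add]; simp
  rw [cosh_eq, sinh_eq]
  linear_combination 2 * h1

lemma strictMono_coshSubst : StrictMono coshSubst := by
  refine strictMono_of_deriv_pos fun x => ?_
  have hc := cosh_pos x
  rw [(hasDerivAt_coshSubst x).deriv]
  positivity

lemma range_coshSubst : Set.range coshSubst = Set.Ioo 0 1 := by
  ext t
  constructor
  · rintro ⟨x, rfl⟩
    have hc := cosh_pos x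
    have h1 : 0 < 1 - coshSubst x := by rw [one_sub_coshSubst]; positivity
    exact ⟨by unfold coshSubst; positivity, by linarith⟩
  · rintro ⟨h0, h1⟩
    have h1' : 0 < 1 - t := by linarith
    -- The preimage of `t` is half its logit.
    refine ⟨log (t / (1 - t)) / 2, ?_⟩
    set y := log (t / (1 - t)) / 2 with hy
    have he : exp y * exp y = t / (1 - t) := by
      rw [← exp_add, hy, add_halves, exp_log (by positivity)]
    have hp := exp_pos y
    have he' : exp y * exp y * (1 - t) = t := by rw [he]; field_simp
    unfold coshSubst
    rw [cosh_eq, exp_neg]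
    field_simp
    linear_combination he'

/-- The integrand of `mecbf` after the substitution, including the Jacobian factor. -/
lemma coshSubst_integrand (α β m x : ℝ) :
    |2 / (2 * cosh x) ^ 2| • (coshSubst x ^ (α - 1) * (1 - coshSubst x) ^ (β - 1) *
        exp (m * coshSubst x * (1 - coshSubst x))) =
      (2 : ℝ) ^ (1 - α - β) *
        (exp ((α - β) * x + m / (4 * cosh x ^ 2)) / cosh x ^ (α + β)) := by
  have hc := cosh_pos x
  have hC : 0 < 2 * cosh x := by positivity
  have h1 : exp x * exp (-x) = 1 := by rw [← exp_add]; simp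
  have hm : m * coshSubst x * (1 - coshSubst x) = m / (4 * cosh x ^ 2) := by
    rw [one_sub_coshSubst, coshSubst]
    field_simp
    linear_combination 4 * m * h1
  have hpow : (2 * cosh x) ^ 2 * ((2 * cosh x) ^ (α - 1) * (2 * cosh x) ^ (β - 1)) =
      2 ^ (α + β) * cosh x ^ (α + β) := by
    rw [← rpow_natCast, ← rpow_add hC, ← rpow_add hC, ← mul_rpow (by norm_num) hc.le]
    congr 1
    push_cast
    ring
  have h2 : (2 : ℝ) ^ (1 - α - β) = 2 / 2 ^ (α + β) := by
    rw [sub_sub, rpow_sub (by norm_num), rpow_one]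
  have he : exp ((α - β) * x) = exp (x * (α - 1)) * exp (-x * (β - 1)) := by
    rw [← exp_add]; ring_nf
  rw [hm, one_sub_coshSubst, coshSubst, div_rpow (exp_pos _).le hC.le,
    div_rpow (exp_pos _).le hC.le, ← exp_mul, ← exp_mul, abs_of_pos (by positivity), smul_eq_mul,
    h2, exp_add, he, div_mul_div_comm, div_mul_div_comm, ← hpow]
  ring

theorem mecbf_cosh_repr (α β m : ℝ) (hα : 0 < α) (hβ : 0 < β) :
    mecbf α β m =
      (2 : ℝ) ^ (1 - α - β) *
        ∫ x : ℝ,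
          Real.exp ((α - β) * x + m / (4 * Real.cosh x ^ 2)) / Real.cosh x ^ (α + β) := by
  rw [mecbf, intervalIntegral.integral_of_le zero_le_one, integral_Ioc_eq_integral_Ioo,
    ← range_coshSubst, ← Set.image_univ,
    integral_image_eq_integral_abs_deriv_smul MeasurableSet.univ
      (fun x _ => (hasDerivAt_coshSubst x).hasDerivWithinAt) strictMono_coshSubst.injective.injOn,
    setIntegral_univ, ← integral_const_mul]
  exact integral_congr_ae (.of_forall fun x => coshSubst_integrand α β m x)
end

section
/- For all real numbers α > 0, β > 0 and every real number m, the modified extension of the classical beta function has the integral representation B(α, β; m) = 2^(2-α-β) · ∫_{0}^{∞} cosh((α-β)·x) · exp(m / (4·cosh²x)) / (cosh x)^(α+β) dx. -/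
/-!
Substitute `t = sigmoid (2x) = eˣ / (2 cosh x)`, a smooth bijection from `ℝ` onto `(0, 1)` with
`1 - t = e⁻ˣ / (2 cosh x)`, `t (1 - t) = 1 / (4 cosh² x)` and `dt = 2 t (1 - t) dx`. The defining
integral becomes the integral over `ℝ` of `2 e^((α-β)x) exp (m / (4 cosh² x)) / (2 cosh x)^(α+β)`
(`mecbf_eq_integral_line`). Folding the line at the origin replaces `e^((α-β)x)` by
`2 cosh ((α-β)x)` on the half line. The folding needs integrability over `ℝ`, which is inherited
from the integrability of the beta integrand on `(0, 1)`.
-/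

open MeasureTheory Real

/-- The integrand on the whole line produced by the substitution `t = sigmoid (2x)`. -/
noncomputable def lineIntegrand (α β m x : ℝ) : ℝ :=
  (2 : ℝ) ^ (1 - α - β) *
    (Real.exp ((α - β) * x) * Real.exp (m / (4 * Real.cosh x ^ 2)) / Real.cosh x ^ (α + β))

lemma sigmoid_two_mul (x : ℝ) : Real.sigmoid (2 * x) = Real.exp x / (2 * Real.cosh x) := by
  have hx := Real.exp_pos x
  have h2 : Real.exp (-(2 * x)) = Real.exp (-x) / Real.exp x := by
    rw [← Real.exp_sub]; congr 1; ring
  rw [Real.sigmoid_def, Real.cosh_eq, h2]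
  have := Real.exp_pos (-x)
  field_simp

lemma one_sub_sigmoid_two_mul (x : ℝ) :
    1 - Real.sigmoid (2 * x) = Real.exp (-x) / (2 * Real.cosh x) := by
  rw [← Real.sigmoid_neg, ← mul_neg, sigmoid_two_mul, Real.cosh_neg]

lemma image_sigmoid_two_mul :
    (fun x : ℝ => Real.sigmoid (2 * x)) '' Set.univ = Set.Ioo 0 1 := by
  rw [Set.image_univ, ← Real.range_sigmoid]
  exact (mul_left_surjective₀ (two_ne_zero' ℝ)).range_comp Real.sigmoid

lemma hasDerivAt_sigmoid_two_mul (x : ℝ) :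
    HasDerivAt (fun x : ℝ => Real.sigmoid (2 * x))
      (2 * (Real.sigmoid (2 * x) * (1 - Real.sigmoid (2 * x)))) x := by
  have h := (Real.hasDerivAt_sigmoid (2 * x)).comp x ((hasDerivAt_id x).const_mul 2)
  rwa [mul_one, mul_comm _ (2 : ℝ)] at h

lemma injOn_sigmoid_two_mul : Set.InjOn (fun x : ℝ => Real.sigmoid (2 * x)) Set.univ := by
  intro x _ y _ h
  have := Real.sigmoid_injective h
  linarith

/-- The Jacobian times the pulled-back beta integrand is `lineIntegrand`. -/
lemma jacobian_smul_eq (α β m x : ℝ) :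
    |2 * (Real.sigmoid (2 * x) * (1 - Real.sigmoid (2 * x)))| •
      (Real.sigmoid (2 * x) ^ (α - 1) * (1 - Real.sigmoid (2 * x)) ^ (β - 1) *
        Real.exp (m * Real.sigmoid (2 * x) * (1 - Real.sigmoid (2 * x)))) =
    lineIntegrand α β m x := by
  have ht := Real.sigmoid_pos (2 * x)
  have hs : 0 < 1 - Real.sigmoid (2 * x) := sub_pos.2 (Real.sigmoid_lt_one _)
  rw [abs_of_pos (by positivity), smul_eq_mul, Real.rpow_sub_one ht.ne', Real.rpow_sub_one hs.ne']
  have hc := Real.cosh_pos x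
  have hexp : m * Real.sigmoid (2 * x) * (1 - Real.sigmoid (2 * x)) =
      m / (4 * Real.cosh x ^ 2) := by
    rw [one_sub_sigmoid_two_mul, sigmoid_two_mul, Real.exp_neg]
    have := Real.exp_pos x
    field_simp
    norm_num
  have hpow : Real.sigmoid (2 * x) ^ α * (1 - Real.sigmoid (2 * x)) ^ β * 2 =
      (2 : ℝ) ^ (1 - α - β) * (Real.exp ((α - β) * x) / Real.cosh x ^ (α + β)) := by
    rw [one_sub_sigmoid_two_mul, sigmoid_two_mul, Real.div_rpow (by positivity) (by positivity),
      Real.div_rpow (by positivity) (by positivity), Real.mul_rpow (by positivity) hc.le,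
      Real.mul_rpow (by positivity) hc.le, ← Real.exp_mul, ← Real.exp_mul, Real.rpow_add hc,
      Real.rpow_sub two_pos, Real.rpow_sub two_pos, Real.rpow_one,
      show (α - β) * x = x * α + -x * β by ring, Real.exp_add]
    field_simp
  rw [hexp, lineIntegrand]
  calc _ = Real.sigmoid (2 * x) ^ α * (1 - Real.sigmoid (2 * x)) ^ β * 2 *
        Real.exp (m / (4 * Real.cosh x ^ 2)) := by field_simp
    _ = _ := by rw [hpow]; ring

lemma integrableOn_beta_integrand (α β m : ℝ) (hα : 0 < α) (hβ : 0 < β) :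
    IntegrableOn (fun t : ℝ => t ^ (α - 1) * (1 - t) ^ (β - 1) * Real.exp (m * t * (1 - t)))
      (Set.Ioo 0 1) := by
  have h := Complex.betaIntegral_convergent (u := (α : ℂ)) (v := (β : ℂ)) (by simpa) (by simpa)
  rw [intervalIntegrable_iff_integrableOn_Ioo_of_le zero_le_one] at h
  have h1 : IntegrableOn (fun t : ℝ => t ^ (α - 1) * (1 - t) ^ (β - 1)) (Set.Ioo 0 1) := by
    refine IntegrableOn.congr_fun h.norm (fun t ht => ?_) measurableSet_Ioo
    have h1t : 0 < 1 - t := sub_pos.2 ht.2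
    have e : (1 : ℂ) - (t : ℂ) = ((1 - t : ℝ) : ℂ) := by push_cast; rfl
    simp only [norm_mul]
    rw [e, Complex.norm_cpow_eq_rpow_re_of_pos ht.1, Complex.norm_cpow_eq_rpow_re_of_pos h1t]
    simp
  refine Integrable.mul_bdd (c := Real.exp |m|) h1 (by fun_prop) ?_
  filter_upwards [ae_restrict_mem measurableSet_Ioo] with t ht
  rw [Real.norm_eq_abs, Real.abs_exp, Real.exp_le_exp]
  have h1t : 0 < 1 - t := sub_pos.2 ht.2
  have hle : t * (1 - t) ≤ 1 := by nlinarith [ht.1, ht.2]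
  calc m * t * (1 - t) = m * (t * (1 - t)) := by ring
    _ ≤ |m| * (t * (1 - t)) :=
      mul_le_mul_of_nonneg_right (le_abs_self m) (mul_pos ht.1 h1t).le
    _ ≤ |m| := mul_le_of_le_one_right (abs_nonneg m) hle

lemma integrable_lineIntegrand (α β m : ℝ) (hα : 0 < α) (hβ : 0 < β) :
    Integrable (lineIntegrand α β m) := by
  have h := integrableOn_beta_integrand α β m hα hβ
  rw [← image_sigmoid_two_mul, integrableOn_image_iff_integrableOn_abs_deriv_smul
    MeasurableSet.univ (fun x _ => (hasDerivAt_sigmoid_two_mul x).hasDerivWithinAt)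
    injOn_sigmoid_two_mul, integrableOn_univ] at h
  simpa only [jacobian_smul_eq] using h

lemma mecbf_eq_integral_line (α β m : ℝ) : mecbf α β m = ∫ x, lineIntegrand α β m x := by
  rw [mecbf, intervalIntegral.integral_of_le zero_le_one, integral_Ioc_eq_integral_Ioo,
    ← image_sigmoid_two_mul, integral_image_eq_integral_abs_deriv_smul
    MeasurableSet.univ (fun x _ => (hasDerivAt_sigmoid_two_mul x).hasDerivWithinAt)
    injOn_sigmoid_two_mul, setIntegral_univ]
  simp only [jacobian_smul_eq]

theorem mecbf_cosh_half_line_repr (α β m : ℝ) (hα : 0 < α) (hβ : 0 < β) :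
    mecbf α β m =
      (2 : ℝ) ^ (2 - α - β) *
        ∫ x in Set.Ioi (0 : ℝ),
          Real.cosh ((α - β) * x) * Real.exp (m / (4 * Real.cosh x ^ 2)) /
            Real.cosh x ^ (α + β) := by
  have hint := integrable_lineIntegrand α β m hα hβ
  have hneg : ∫ x in Set.Iic (0 : ℝ), lineIntegrand α β m x =
      ∫ x in Set.Ioi (0 : ℝ), lineIntegrand α β m (-x) := by
    rw [integral_comp_neg_Ioi, neg_zero]
  rw [mecbf_eq_integral_line,
    ← intervalIntegral.integral_Iic_add_Ioi (b := 0) hint.integrableOn hint.integrableOn, hneg,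
    ← integral_add hint.comp_neg.integrableOn hint.integrableOn, ← integral_const_mul]
  congr 1
  funext x
  rw [lineIntegrand, lineIntegrand, Real.cosh_neg, Real.cosh_eq ((α - β) * x), mul_neg,
    show 2 - α - β = (1 - α - β) + 1 by ring, Real.rpow_add_one two_ne_zero]
  ring
end

section
/- For all real numbers α > 0, β > 0 and every real number m, the modified extension of the classical beta function satisfies the functional relation B(α, β+1; m) + B(α+1, β; m) = B(α, β; m). -/
/-!
On `(0, 1)` the integrand of `B(α, β+1; m)` is `1 - t` times that of `B(α, β; m)`, and the integrand
of `B(α+1, β; m)` is `t` times it, so the two add up to the integrand of `B(α, β; m)`. Additivity of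
the integral needs integrability (`mecbf_intervalIntegrable`), which follows from convergence of
the classical beta integral since the exponential factor is continuous.
-/

open MeasureTheory Real

lemma mecbf_intervalIntegrable {α β : ℝ} (m : ℝ) (hα : 0 < α) (hβ : 0 < β) :
    IntervalIntegrable
      (fun t : ℝ => t ^ (α - 1) * (1 - t) ^ (β - 1) * Real.exp (m * t * (1 - t)))
      volume 0 1 := by
  have hbeta : IntervalIntegrable (fun t : ℝ => t ^ (α - 1) * (1 - t) ^ (β - 1)) volume 0 1 := by
    have hc := Complex.betaIntegral_convergent (u := α) (v := β) (by simpa) (by simpa)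
    rw [intervalIntegrable_iff_integrableOn_Ioc_of_le zero_le_one] at hc ⊢
    refine IntegrableOn.congr_fun hc.re (fun t ht => ?_) measurableSet_Ioc
    -- Real and complex powers agree because both bases are nonnegative.
    have h : ((t : ℂ) ^ ((α : ℂ) - 1) * (1 - (t : ℂ)) ^ ((β : ℂ) - 1))
        = ((t ^ (α - 1) * (1 - t) ^ (β - 1) : ℝ) : ℂ) := by
      rw [Complex.ofReal_mul, Complex.ofReal_cpow ht.1.le,
        Complex.ofReal_cpow (sub_nonneg.2 ht.2)]
      push_cast
      rfl
    simp only [h]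
    exact Complex.ofReal_re _
  exact hbeta.mul_continuousOn (by fun_prop)

theorem mecbf_functional_relation (α β m : ℝ) (hα : 0 < α) (hβ : 0 < β) :
    mecbf α (β + 1) m + mecbf (α + 1) β m = mecbf α β m := by
  unfold mecbf
  rw [← intervalIntegral.integral_add (mecbf_intervalIntegrable m hα (by linarith))
    (mecbf_intervalIntegrable m (by linarith) hβ)]
  -- Passing to the open interval makes both bases nonzero, as `rpow_add_one` requires.
  rw [intervalIntegral.integral_of_le zero_le_one, intervalIntegral.integral_of_le zero_le_one,
    integral_Ioc_eq_integral_Ioo, integral_Ioc_eq_integral_Ioo]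
  refine setIntegral_congr_fun measurableSet_Ioo (fun t ht => ?_)
  have h1 : t ^ (α + 1 - 1) = t ^ (α - 1) * t := by
    rw [← rpow_add_one ht.1.ne']; ring_nf
  have h2 : (1 - t) ^ (β + 1 - 1) = (1 - t) ^ (β - 1) * (1 - t) := by
    rw [← rpow_add_one (sub_pos.2 ht.2).ne']; ring_nf
  simp only [h1, h2]
  ring
end

section
/- For all real numbers α > 0 and β with 0 < β < 1, and every real number m, the modified extension of the classical beta function satisfies the summation relation B(α, 1-β; m) = Σ_{n=0}^∞ ((β)_n / n!) · B(α+n, 1; m), where (β)_n = β(β+1)⋯(β+n-1) is the Pochhammer symbol (rising factorial) with (β)_0 = 1. -/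
/-!
On `(0, 1)` the binomial series gives `(1 - t) ^ (-β) = ∑ (β)_n / n! * t ^ n`. Multiplying by
`t ^ (α - 1) * exp (m t (1 - t))` and integrating term by term yields the summation. All terms are
nonnegative, so the series dominates itself, and the interchange only requires that its sum be
integrable. This is the convergence of the beta integral (`intervalIntegrable_mecbf`), which uses
`0 < α` and `β < 1`.
-/

open MeasureTheory Real

theorem hasSum_one_sub_rpow_neg (β t : ℝ) (ht0 : 0 < t) (ht1 : t < 1) :
    HasSum (fun n : ℕ => (ascPochhammer ℝ n).eval β / (n.factorial : ℝ) * t ^ n)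
      ((1 - t) ^ (-β)) := by
  have h := (one_div_one_sub_rpow_hasFPowerSeriesOnBall_zero β).hasSum (y := t)
    (by simpa [enorm_eq_nnnorm, abs_of_pos ht0, ← NNReal.coe_lt_coe] using ht1)
  have hc : ∀ n : ℕ, Ring.choose (β + n - 1) n
      = (ascPochhammer ℝ n).eval β / (n.factorial : ℝ) := by
    intro n
    rw [Ring.choose, show β + n - 1 - n + 1 = β by ring, eq_div_iff (by positivity), mul_comm,
      ← nsmul_eq_mul, Ring.factorial_nsmul_multichoose_eq_ascPochhammer,
      Polynomial.ascPochhammer_smeval_eq_eval]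
  rw [rpow_neg (by linarith)]
  simpa [hc, mul_comm] using h

theorem intervalIntegrable_mecbf (α β m : ℝ) (hα : 0 < α) (hβ : 0 < β) :
    IntervalIntegrable
      (fun t : ℝ => t ^ (α - 1) * (1 - t) ^ (β - 1) * Real.exp (m * t * (1 - t))) volume 0 1 := by
  refine IntervalIntegrable.mul_continuousOn ?_ (by fun_prop)
  have h := (Complex.betaIntegral_convergent (u := α) (v := β) (by simpa) (by simpa)).norm
  refine h.congr_ae ?_
  rw [Filter.EventuallyEq, ae_restrict_iff' measurableSet_uIoc]
  refine Filter.Eventually.of_forall fun t ht => ?_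
  rw [Set.uIoc_of_le zero_le_one] at ht
  have h0 : 0 ≤ t := ht.1.le
  have h1 : 0 ≤ 1 - t := by linarith [ht.2]
  have e : (t : ℂ) ^ ((α : ℂ) - 1) * (1 - (t : ℂ)) ^ ((β : ℂ) - 1)
      = ((t ^ (α - 1) * (1 - t) ^ (β - 1) : ℝ) : ℂ) := by
    push_cast [Complex.ofReal_cpow h0, Complex.ofReal_cpow h1]
    rfl
  simp only [e, Complex.norm_real, Real.norm_eq_abs]
  exact abs_of_nonneg (by positivity)

theorem mecbf_first_summation (α β m : ℝ) (hα : 0 < α) (hβ0 : 0 < β) (hβ1 : β < 1) :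
    mecbf α (1 - β) m =
      ∑' n : ℕ, (ascPochhammer ℝ n).eval β / (n.factorial : ℝ) * mecbf (α + n) 1 m := by
  let F : ℕ → ℝ → ℝ := fun n t => (ascPochhammer ℝ n).eval β / (n.factorial : ℝ) *
    (t ^ (α + n - 1) * (1 - t) ^ ((1 : ℝ) - 1) * Real.exp (m * t * (1 - t)))
  -- The endpoint `t = 1`, where the binomial series diverges, is a null set.
  have hae : ∀ᵐ t : ℝ, t ≠ 1 := by simp [ae_iff]
  have hsum : ∀ᵐ t : ℝ, t ∈ Set.uIoc (0 : ℝ) 1 → HasSum (fun n => F n t)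
      (t ^ (α - 1) * (1 - t) ^ (1 - β - 1) * Real.exp (m * t * (1 - t))) := by
    filter_upwards [hae] with t ht1 ht
    rw [Set.uIoc_of_le zero_le_one] at ht
    have h := (hasSum_one_sub_rpow_neg β t ht.1 (lt_of_le_of_ne ht.2 ht1)).mul_left
      (t ^ (α - 1) * Real.exp (m * t * (1 - t)))
    have hF : (fun n => F n t) = fun n : ℕ => t ^ (α - 1) * Real.exp (m * t * (1 - t)) *
        ((ascPochhammer ℝ n).eval β / (n.factorial : ℝ) * t ^ n) := by
      ext n
      simp only [F]
      rw [show α + n - 1 = α - 1 + n by ring, rpow_add ht.1, rpow_natCast, sub_self, rpow_zero]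
      ring
    rw [hF, show 1 - β - 1 = -β by ring, mul_right_comm (t ^ (α - 1))]
    exact h
  have key : HasSum (fun n => ∫ t in (0:ℝ)..1, F n t) (mecbf α (1 - β) m) := by
    refine intervalIntegral.hasSum_integral_of_dominated_convergence F ?_ ?_ ?_ ?_ hsum
    · intro n
      exact Measurable.aestronglyMeasurable (by fun_prop)
    · intro n
      refine Filter.Eventually.of_forall fun t ht => ?_
      rw [Set.uIoc_of_le zero_le_one] at ht
      have h0 : 0 ≤ t := ht.1.le
      have h1 : 0 ≤ 1 - t := by linarith [ht.2]
      have hp : 0 < (ascPochhammer ℝ n).eval β := ascPochhammer_pos n β hβ0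
      exact (Real.norm_of_nonneg (by positivity)).le
    · filter_upwards [hsum] with t h ht using (h ht).summable
    · refine (intervalIntegrable_mecbf α (1 - β) m hα (by linarith)).congr_ae ?_
      rw [Filter.EventuallyEq, ae_restrict_iff' measurableSet_uIoc]
      filter_upwards [hsum] with t h ht using (h ht).tsum_eq.symm
  rw [← key.tsum_eq]
  simp only [F, intervalIntegral.integral_const_mul, mecbf]
end

section
/- For all real numbers p > 0, q > 0, every real number m, and every real number t, the moment generating integral of the modified extended beta distribution satisfies ∫₀¹ exp(t·x) · x^(p-1) · (1-x)^(q-1) · exp(m·x·(1-x)) dx = Σ_{n=0}^∞ (t^n / n!) · B(p+n, q; m); equivalently, the moment generating function of the distribution with density f(x) = x^(p-1)(1-x)^(q-1) exp(m x(1-x)) / B(p,q;m) on (0,1) equals (1 / B(p,q;m)) · Σ_{n=0}^∞ (t^n / n!) · B(p+n, q; m). -/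
/-!
The weight `w x = x ^ (p - 1) * (1 - x) ^ (q - 1) * exp (m * x * (1 - x))` is integrable on `(0, 1)`
for `p, q > 0`: it is the classical beta integrand times a continuous function. Expanding
`exp (t * x) = ∑ (t * x) ^ n / n!`, the partial sums times `w` are dominated by `exp |t| * |w|`,
so the series may be integrated term by term, and `x ^ n * x ^ (p - 1) = x ^ (p + n - 1)`
identifies the terms as values of `mecbf`.
-/

open MeasureTheory Real

/-- The modified beta integrand is integrable, by comparison with the complex beta integrand. -/
lemma mecbf_intervalIntegrable_s19 (p q m : ℝ) (hp : 0 < p) (hq : 0 < q) :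
    IntervalIntegrable
      (fun x : ℝ => x ^ (p - 1) * (1 - x) ^ (q - 1) * Real.exp (m * x * (1 - x))) volume 0 1 := by
  have hbeta : IntervalIntegrable (fun x : ℝ => x ^ (p - 1) * (1 - x) ^ (q - 1)) volume 0 1 := by
    have hc := Complex.betaIntegral_convergent (u := (p : ℂ)) (v := (q : ℂ)) (by simpa) (by simpa)
    rw [intervalIntegrable_iff_integrableOn_Ioc_of_le zero_le_one] at hc ⊢
    refine hc.re.congr ?_
    filter_upwards [ae_restrict_mem measurableSet_Ioc] with x hx
    have h1 : ((x : ℂ) ^ ((p : ℂ) - 1)) = ((x ^ (p - 1) : ℝ) : ℂ) := by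
      rw [Complex.ofReal_cpow hx.1.le]; push_cast; rfl
    have h2 : ((1 - (x : ℂ)) ^ ((q : ℂ) - 1)) = (((1 - x) ^ (q - 1) : ℝ) : ℂ) := by
      rw [Complex.ofReal_cpow (sub_nonneg.2 hx.2)]; push_cast; rfl
    rw [h1, h2, ← Complex.ofReal_mul]
    simp
  exact hbeta.mul_continuousOn (by fun_prop)

theorem mecbf_mgf (p q m t : ℝ) (hp : 0 < p) (hq : 0 < q) :
    (∫ x in (0:ℝ)..1,
        Real.exp (t * x) * (x ^ (p - 1) * (1 - x) ^ (q - 1) * Real.exp (m * x * (1 - x)))) =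
      ∑' n : ℕ, t ^ n / (n.factorial : ℝ) * mecbf (p + n) q m ∧
    (∫ x in (0:ℝ)..1,
        Real.exp (t * x) *
          (x ^ (p - 1) * (1 - x) ^ (q - 1) * Real.exp (m * x * (1 - x)) / mecbf p q m)) =
      (1 / mecbf p q m) * ∑' n : ℕ, t ^ n / (n.factorial : ℝ) * mecbf (p + n) q m := by
  have key : (∫ x in (0:ℝ)..1,
        Real.exp (t * x) * (x ^ (p - 1) * (1 - x) ^ (q - 1) * Real.exp (m * x * (1 - x)))) =
      ∑' n : ℕ, t ^ n / (n.factorial : ℝ) * mecbf (p + n) q m := by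
    have hw := mecbf_intervalIntegrable_s19 p q m hp hq
    set w : ℝ → ℝ := fun x => x ^ (p - 1) * (1 - x) ^ (q - 1) * Real.exp (m * x * (1 - x))
      with hw_def
    have hexp (y : ℝ) : HasSum (fun n : ℕ => y ^ n / (n.factorial : ℝ)) (Real.exp y) := by
      rw [Real.exp_eq_exp_ℝ]
      exact NormedSpace.expSeries_div_hasSum_exp y
    have hsum := intervalIntegral.hasSum_integral_of_dominated_convergence
      (μ := volume) (a := 0) (b := 1)
      (F := fun (n : ℕ) (x : ℝ) => (t * x) ^ n / (n.factorial : ℝ) * w x)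
      (f := fun x => Real.exp (t * x) * w x)
      (fun n x => |t| ^ n / (n.factorial : ℝ) * |w x|)
      (fun n => by
        refine AEStronglyMeasurable.mul (by fun_prop) ?_
        rw [Set.uIoc_of_le zero_le_one]
        exact hw.aestronglyMeasurable)
      (fun n => by
        refine Filter.Eventually.of_forall fun x hx => ?_
        rw [Set.uIoc_of_le zero_le_one] at hx
        rw [Real.norm_eq_abs, abs_mul, abs_div, abs_pow, abs_mul, Nat.abs_cast,
          abs_of_pos hx.1]
        have : |t| * x ≤ |t| := mul_le_of_le_one_right (abs_nonneg t) hx.2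
        have h0 : 0 ≤ |t| * x := mul_nonneg (abs_nonneg t) hx.1.le
        gcongr)
      (Filter.Eventually.of_forall fun x _ => ((hexp |t|).mul_right |w x|).summable)
      (by
        have : (fun x => ∑' n : ℕ, |t| ^ n / (n.factorial : ℝ) * |w x|) =
            fun x => Real.exp |t| * |w x| := by
          funext x
          exact ((hexp |t|).mul_right |w x|).tsum_eq
        rw [this]
        exact hw.abs.const_mul _)
      (Filter.Eventually.of_forall fun x _ => (hexp (t * x)).mul_right (w x))
    rw [← hsum.tsum_eq]
    refine tsum_congr fun n => ?_
    rw [mecbf, ← intervalIntegral.integral_const_mul]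
    refine intervalIntegral.integral_congr_ae (Filter.Eventually.of_forall fun x hx => ?_)
    rw [Set.uIoc_of_le zero_le_one] at hx
    have hpow : x ^ (p + n - 1) = x ^ (p - 1) * x ^ n := by
      rw [← Real.rpow_natCast x n, ← Real.rpow_add hx.1]
      congr 1
      ring
    simp only [hw_def, hpow]
    ring
  refine ⟨key, ?_⟩
  rw [← key, ← intervalIntegral.integral_const_mul]
  congr 1
  funext x
  ring
end
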